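/- Let w be a weight function on [-1,1], let (π_k)_{k≤m} be orthonormal polynomials for w satisfying the three-term recurrence with Jacobi matrices J_m, and let (λ_i, ν_i)_{i<m} be an m-point Gauss quadrature rule for w whose nodes are zeros of π_m. Suppose every entry A_{kl} of A is a polynomial of degree at most m_a and every entry b_k of b is a polynomial of degree at most m_b, and m ≥ max(⌈(m_a + 2n − 1)/2⌉, ⌈(m_b + n)/2⌉). If the N×n matrix X_g solves the n-term Galerkin system for A, b, and w, then for all k < N and i < n: Σ_{l<N} Σ_{j<n} (A_{kl}(J_m))_{ij} · X_g(l,j) = (b_k(J_m))_{i,0}, where p(J_m) denotes evaluation of the polynomial p at the m×m matrix J_m, and indices i,j < n refer to the leading n×n principal submatrix of p(J_m). In block form, [A]_n(J_m) vec(X_gᵀ) = [b]_n(J_m) e_0. -/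

import Mathlib

open MeasureTheory Polynomial Matrix

/-- The `m × m` symmetric tridiagonal Jacobi matrix with diagonal entries
`α 0, …, α (m-1)` and off-diagonal entries `β 1, …, β (m-1)`. -/
def jacobiMatrix (α β : ℕ → ℝ) (m : ℕ) : Matrix (Fin m) (Fin m) ℝ :=
  Matrix.of fun i j =>
    if (i : ℕ) = (j : ℕ) then α (i : ℕ)
    else if (i : ℕ) + 1 = (j : ℕ) ∨ (j : ℕ) + 1 = (i : ℕ) then β (max (i : ℕ) (j : ℕ))
    else 0

/-!
By the three-term recurrence, multiplication by `X` acts on the family `π` as the infinite Jacobi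
matrix `J`, so `(p(J)) i j = L (π i * π j * p)` for the underlying moment functional `L`. Replacing
`J` by its truncation `Jₘ` drops only terms of the form `L (π m * q)`, and these vanish as long as
`deg q < m`; hence the identity persists for `p(Jₘ)` when `i + j + deg p < 2 * m`. For the
polynomials `A k l` and `b k` the degree bounds put all entries in this range, so the matrix
equation is the Galerkin system itself.
-/

/-- `π 0, …, π (m - 1)` are orthonormal for the bilinear form `L (p * q)` of the moment functional
`L`, and orthogonal to `π m`. Since `L (π m * π m)` is left free, `L` may be a quadrature rule with
nodes at the zeros of `π m`. -/
def IsOrthonormalUpTo (L : ℝ[X] →ₗ[ℝ] ℝ) (π : ℕ → ℝ[X]) (m : ℕ) : Prop :=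
  ∀ j < m, ∀ k ≤ m, L (π j * π k) = if j = k then 1 else 0

/-- The three-term recurrence `β (k + 1) π (k + 1) = (X - α k) π k - β k π (k - 1)` for `k < m`,
where the conditional encodes the convention `π (-1) = 0`. -/
def SatisfiesThreeTermRecurrence (α β : ℕ → ℝ) (π : ℕ → ℝ[X]) (m : ℕ) : Prop :=
  ∀ k < m, C (β (k + 1)) * π (k + 1)
    = (X - C (α k)) * π k - C (β k) * (if k = 0 then 0 else π (k - 1))

/-- The moment functional `p ↦ ∫ p w` on polynomials of an integrable weight `w`. -/
noncomputable def weightedIntegral {w : ℝ → ℝ} {a b : ℝ} (hw : IntervalIntegrable w volume a b) :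
    ℝ[X] →ₗ[ℝ] ℝ where
  toFun p := ∫ s in a..b, p.eval s * w s
  map_add' p q := by
    simp only [eval_add, add_mul]
    exact intervalIntegral.integral_add (hw.continuousOn_mul p.continuousOn)
      (hw.continuousOn_mul q.continuousOn)
  map_smul' c p := by
    simp only [eval_smul, smul_eq_mul, mul_assoc, intervalIntegral.integral_const_mul,
      RingHom.id_apply]

lemma weightedIntegral_apply {w : ℝ → ℝ} {a b : ℝ} (hw : IntervalIntegrable w volume a b)
    (p : ℝ[X]) : weightedIntegral hw p = ∫ s in a..b, p.eval s * w s :=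
  rfl

lemma satisfiesThreeTermRecurrence_of_eval {α β : ℕ → ℝ} {π : ℕ → ℝ[X]}
    {m : ℕ} (h : ∀ k < m, ∀ s : ℝ, β (k + 1) * (π (k + 1)).eval s
      = (s - α k) * (π k).eval s - β k * (if k = 0 then 0 else (π (k - 1)).eval s)) :
    SatisfiesThreeTermRecurrence α β π m := by
  intro k hk
  refine Polynomial.funext fun s => ?_
  simpa [apply_ite (eval s)] using h k hk s

section JacobiMatrix

variable {m : ℕ} (α β : ℕ → ℝ)

lemma jacobiMatrix_apply_eq_zero_of_succ_lt {i j : Fin m} (h : (j : ℕ) + 1 < i) :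
    jacobiMatrix α β m i j = 0 := by
  simp only [jacobiMatrix, of_apply]
  rw [if_neg (by lia), if_neg (by lia)]

lemma sum_mul_jacobiMatrix (f : ℕ → ℝ) (j : Fin m) (hf : (j : ℕ) + 1 = m → f m = 0) :
    ∑ k : Fin m, f k * jacobiMatrix α β m k j
      = β (j + 1) * f (j + 1) + α j * f j + β j * (if (j : ℕ) = 0 then 0 else f (j - 1)) := by
  obtain ⟨j, hj⟩ := j
  let g (k : ℕ) : ℝ :=
    (if j + 1 = k then β k * f k else 0) + (if j = k then α k * f k else 0)
      + (if j - 1 = k then β j * (if j = 0 then 0 else f k) else 0)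
  have entry (k : Fin m) : f k * jacobiMatrix α β m k ⟨j, hj⟩ = g k := by
    simp only [jacobiMatrix, of_apply, g]
    grind
  have boundary : (if j + 1 < m then β (j + 1) * f (j + 1) else 0) = β (j + 1) * f (j + 1) := by
    grind
  calc ∑ k : Fin m, f k * jacobiMatrix α β m k ⟨j, hj⟩
    _ = ∑ k : Fin m, g k := Finset.sum_congr rfl fun k _ => entry k
    _ = ∑ k ∈ Finset.range m, g k := Fin.sum_univ_eq_sum_range g m
    _ = _ := by
        simp only [g, Finset.sum_add_distrib, Finset.sum_ite_eq, Finset.mem_range, boundary,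
          if_pos hj, if_pos ((Nat.sub_le j 1).trans_lt hj)]

end JacobiMatrix

section Moments

variable {L : ℝ[X] →ₗ[ℝ] ℝ} {π : ℕ → ℝ[X]} {α β : ℕ → ℝ} {m : ℕ}

lemma SatisfiesThreeTermRecurrence.map_mul_X_mul (hrec : SatisfiesThreeTermRecurrence α β π m)
    {k : ℕ} (hk : k < m) (L : ℝ[X] →ₗ[ℝ] ℝ) (q : ℝ[X]) :
    L (π k * X * q) = β (k + 1) * L (π (k + 1) * q) + α k * L (π k * q)
      + β k * (if k = 0 then 0 else L (π (k - 1) * q)) := by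
  have expand : π k * X * q = β (k + 1) • (π (k + 1) * q) + α k • (π k * q)
      + β k • ((if k = 0 then 0 else π (k - 1)) * q) := by
    simp only [smul_eq_C_mul]
    linear_combination -q * hrec k hk
  rw [expand]
  split_ifs <;> simp

lemma IsOrthonormalUpTo.map_mul_X_pow_mul_eq_zero (horth : IsOrthonormalUpTo L π m)
    (hrec : SatisfiesThreeTermRecurrence α β π m) {i d : ℕ} (h : i + d < m) :
    L (π i * X ^ d * π m) = 0 := by
  induction d generalizing i with
  | zero => simpa [(show i < m from h).ne] using horth i h m le_rfl
  | succ d ih =>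
    have vanish {k : ℕ} (hk : k ≤ i + 1) : L (π k * (X ^ d * π m)) = 0 := by
      rw [← mul_assoc]
      exact ih (by lia)
    rw [show π i * X ^ (d + 1) * π m = π i * X * (X ^ d * π m) by ring,
      hrec.map_mul_X_mul (by lia) L, vanish le_rfl, vanish i.le_succ, vanish (by lia)]
    simp

theorem jacobiMatrix_pow_apply (horth : IsOrthonormalUpTo L π m)
    (hrec : SatisfiesThreeTermRecurrence α β π m) {d : ℕ} {i j : Fin m}
    (h : (i : ℕ) + j + d < 2 * m) :
    (jacobiMatrix α β m ^ d) i j = L (π i * π j * X ^ d) := by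
  induction d generalizing j with
  | zero => simp [horth i i.2 j j.2.le, one_apply, Fin.ext_iff]
  | succ d ih =>
    have truncation (hj : (j : ℕ) + 1 = m) : L (π m * (π i * X ^ d)) = 0 := by
      rw [mul_comm]
      exact horth.map_mul_X_pow_mul_eq_zero hrec (by lia)
    calc (jacobiMatrix α β m ^ (d + 1)) i j
      _ = ∑ k, (jacobiMatrix α β m ^ d) i k * jacobiMatrix α β m k j := by
          rw [pow_succ, mul_apply]
      _ = ∑ k : Fin m, L (π k * (π i * X ^ d)) * jacobiMatrix α β m k j := by
          refine Finset.sum_congr rfl fun k _ => ?_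
          rcases le_or_gt (k : ℕ) (j + 1) with hk | hk
          · rw [ih (by lia), mul_left_comm, mul_assoc]
          · simp only [jacobiMatrix_apply_eq_zero_of_succ_lt α β hk, mul_zero]
      _ = L (π j * X * (π i * X ^ d)) := by
          rw [sum_mul_jacobiMatrix α β (fun k => L (π k * (π i * X ^ d))) j truncation,
            hrec.map_mul_X_mul j.2]
      _ = L (π i * π j * X ^ (d + 1)) := by ring_nf

theorem aeval_jacobiMatrix_apply (horth : IsOrthonormalUpTo L π m)
    (hrec : SatisfiesThreeTermRecurrence α β π m) {p : ℝ[X]} {d : ℕ} (hp : p.degree ≤ d)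
    {i j : Fin m} (h : (i : ℕ) + j + d < 2 * m) :
    aeval (jacobiMatrix α β m) p i j = L (π i * π j * p) := by
  have hd : p.natDegree < d + 1 := Nat.lt_succ_of_le (natDegree_le_of_degree_le hp)
  calc aeval (jacobiMatrix α β m) p i j
    _ = ∑ e ∈ Finset.range (d + 1), p.coeff e * (jacobiMatrix α β m ^ e) i j := by
        simp only [aeval_eq_sum_range' hd, Matrix.sum_apply, Matrix.smul_apply, smul_eq_mul]
    _ = ∑ e ∈ Finset.range (d + 1), p.coeff e * L (π i * π j * X ^ e) := by
        refine Finset.sum_congr rfl fun e he => ?_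
        rw [jacobiMatrix_pow_apply horth hrec (by have := Finset.mem_range.1 he; lia)]
    _ = L (π i * π j * p) := by
        conv_rhs => rw [p.as_sum_range_C_mul_X_pow' hd]
        simp only [Finset.mul_sum, map_sum, ← smul_eq_C_mul, mul_smul_comm, map_smul, smul_eq_mul]

theorem galerkin_jacobi_system_general {ι κ : Type*} [Fintype ι] {n m_a m_b : ℕ} (hm0 : 0 < m)
    (hnm : n ≤ m) (hπ0 : π 0 = 1) (horth : IsOrthonormalUpTo L π m)
    (hrec : SatisfiesThreeTermRecurrence α β π m) {A : κ → ι → ℝ[X]} {b : κ → ℝ[X]}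
    (hdegA : ∀ k l, (A k l).degree ≤ m_a) (hdegb : ∀ k, (b k).degree ≤ m_b)
    (hm1 : m_a + 2 * n ≤ 2 * m + 1) (hm2 : m_b + n ≤ 2 * m) {Xg : Matrix ι (Fin n) ℝ}
    (hXg : ∀ (i : Fin n) (k : κ),
      ∑ j : Fin n, ∑ l, L (π i * π j * A k l) * Xg l j = L (π i * b k))
    (k : κ) (i : Fin n) :
    ∑ l, ∑ j : Fin n,
        aeval (jacobiMatrix α β m) (A k l) (Fin.castLE hnm i) (Fin.castLE hnm j) * Xg l j
      = aeval (jacobiMatrix α β m) (b k) (Fin.castLE hnm i) ⟨0, hm0⟩ := by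
  have entryA (l : ι) (j : Fin n) :
      aeval (jacobiMatrix α β m) (A k l) (Fin.castLE hnm i) (Fin.castLE hnm j)
        = L (π i * π j * A k l) :=
    aeval_jacobiMatrix_apply horth hrec (hdegA k l) (by simp only [Fin.val_castLE]; lia)
  have entryb : aeval (jacobiMatrix α β m) (b k) (Fin.castLE hnm i) ⟨0, hm0⟩ = L (π i * b k) := by
    rw [aeval_jacobiMatrix_apply horth hrec (hdegb k) (by simp only [Fin.val_castLE]; lia)]
    simp only [Fin.val_castLE, hπ0, mul_one]
  simp only [entryA, entryb]
  rw [Finset.sum_comm, hXg]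

end Moments

/-- **The Galerkin coefficients satisfy `[A]ₙ(Jₘ) vec(Xgᵀ) = [b]ₙ(Jₘ) e₀`.**
With orthonormal polynomials `π` for `w`, recurrence coefficients `α`, `β`,
and an `m`-point Gauss rule whose nodes are zeros of `π m`, where every entry of
`A` (resp. `b`) is a polynomial of degree at most `m_a` (resp. `m_b`) and
`m ≥ ⌈(m_a + 2n - 1)/2⌉`, `m ≥ ⌈(m_b + n)/2⌉`: if the `N × n` matrix `Xg` solves
the `n`-term Galerkin system, then blockwise, using the leading `n × n` principal
submatrices of `(A k l)(Jₘ)` and `(b k)(Jₘ)`,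
`∑ l ∑ j ((A k l)(Jₘ))_{i j} * Xg l j = ((b k)(Jₘ))_{i 0}`. -/
theorem galerkin_jacobi_system
    (n N m m_a m_b : ℕ) (hm0 : 0 < m) (hnm : n ≤ m) (w : ℝ → ℝ)
    (hw_pos : ∀ s ∈ Set.Icc (-1 : ℝ) 1, 0 < w s)
    (hw_norm : (∫ s in (-1 : ℝ)..1, w s) = 1)
    (π : ℕ → Polynomial ℝ)
    (hπ0 : π 0 = 1)
    (hπdeg : ∀ k, (π k).degree = (k : ℕ))
    (hπorth : ∀ j k : ℕ, (∫ s in (-1 : ℝ)..1, (π j).eval s * (π k).eval s * w s)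
      = if j = k then (1 : ℝ) else 0)
    (α β : ℕ → ℝ) (hβ : ∀ k : ℕ, 0 < β (k + 1))
    (hrec : ∀ (k : ℕ) (s : ℝ), β (k + 1) * (π (k + 1)).eval s
      = (s - α k) * (π k).eval s - β k * (if k = 0 then 0 else (π (k - 1)).eval s))
    (lam ν : Fin m → ℝ)
    (hlam_mem : ∀ i, lam i ∈ Set.Icc (-1 : ℝ) 1)
    (hlam_inj : Function.Injective lam)
    (hν_pos : ∀ i, 0 < ν i)
    (hexact : ∀ p : Polynomial ℝ, p.degree < (2 * m : ℕ) →
      (∫ s in (-1 : ℝ)..1, p.eval s * w s) = ∑ i, ν i * p.eval (lam i))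
    (hzeros : ∀ i, (π m).eval (lam i) = 0)
    (A : Fin N → Fin N → Polynomial ℝ) (b : Fin N → Polynomial ℝ)
    (hdegA : ∀ k l, (A k l).degree ≤ (m_a : ℕ))
    (hdegb : ∀ k, (b k).degree ≤ (m_b : ℕ))
    (hm1 : m_a + 2 * n - 1 ≤ 2 * m)
    (hm2 : m_b + n ≤ 2 * m)
    (Xg : Matrix (Fin N) (Fin n) ℝ)
    (hXg : ∀ (j : Fin n) (k' : Fin N),
      (∑ k : Fin n, ∑ l : Fin N,
        (∫ s in (-1 : ℝ)..1,
          (π (j : ℕ)).eval s * (π (k : ℕ)).eval s * (A k' l).eval s * w s) * Xg l k)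
      = ∫ s in (-1 : ℝ)..1, (π (j : ℕ)).eval s * (b k').eval s * w s) :
    ∀ (k : Fin N) (i : Fin n),
      (∑ l : Fin N, ∑ j : Fin n,
        (Polynomial.aeval (jacobiMatrix α β m) (A k l)) (Fin.castLE hnm i) (Fin.castLE hnm j)
          * Xg l j)
      = (Polynomial.aeval (jacobiMatrix α β m) (b k)) (Fin.castLE hnm i) ⟨0, hm0⟩ := by
  have hw : IntervalIntegrable w volume (-1) 1 :=
    intervalIntegral.intervalIntegrable_of_integral_ne_zero (by simp [hw_norm])
  have horth : IsOrthonormalUpTo (weightedIntegral hw) π m := fun j _ k _ => by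
    simpa only [weightedIntegral_apply, eval_mul] using hπorth j k
  exact galerkin_jacobi_system_general hm0 hnm hπ0 horth
    (satisfiesThreeTermRecurrence_of_eval fun k _ => hrec k) hdegA hdegb (by lia) hm2
    (by simpa only [weightedIntegral_apply, eval_mul] using hXg)
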